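/- arXiv:1203.4450 — 3 statements merged into one kernel-verified Lean document; each statement's English description precedes it below -/
import Mathlib

section
/- Let (R,m) be a Noetherian local ring and I an ideal of R. Let x_1,…,x_s,y be a minimal generating set of I, where J=(x_1,…,x_s) is a reduction of I with reduction number r = r_J(I). Assume that for all n ≥ 2 and all i = 1,…,s one has ((x_1,…,x_{i-1})I^{n-1} : x_i) ∩ I^{n-1} = (x_1,…,x_{i-1})I^{n-2}. Then for each n ≥ 2 the map sending a homogeneous F ∈ Q_n to F(0,…,0,1) ∈ (JI^{n-1} : y^n) induces an isomorphism of R-modules (Q/Q⟨n-1⟩)_n ≅ (JI^{n-1} : y^n)/(JI^{n-2} : y^{n-1}). In particular rt(I) = r_J(I) + 1, and there is a form Y^{r+1} − Σ_i X_i F_i ∈ Q_{r+1}, with each F_i homogeneous of degree r, such that Q = (Y^{r+1} − Σ_i X_i F_i) + Q⟨r⟩. -/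
open MvPolynomial

section Defs

variable {R : Type*} [CommRing R]

/-- The presentation of the Rees algebra of the ideal generated by `g`,
sending the `i`-th variable to `(g i) · t` inside `R[t]`. -/
noncomputable def reesPres {m : ℕ} (g : Fin m → R) :
    MvPolynomial (Fin m) R →ₐ[R] Polynomial R :=
  aeval fun i => Polynomial.C (g i) * Polynomial.X

/-- `Q`, the ideal of equations of the Rees algebra w.r.t. the generators `g`. -/
noncomputable def presKer {m : ℕ} (g : Fin m → R) : Ideal (MvPolynomial (Fin m) R) :=
  RingHom.ker (reesPres g)

/-- `Q⟨d⟩`, the subideal of `Q` generated by the homogeneous equations of degree at most `d`. -/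
noncomputable def presKerLe {m : ℕ} (g : Fin m → R) (d : ℕ) : Ideal (MvPolynomial (Fin m) R) :=
  Ideal.span {F | F ∈ presKer g ∧ ∃ k ≤ d, F.IsHomogeneous k}

/-- `Q_n`, the `R`-module of homogeneous equations of degree `n`. -/
noncomputable def presKerHomog {m : ℕ} (g : Fin m → R) (n : ℕ) :
    Submodule R (MvPolynomial (Fin m) R) :=
  homogeneousSubmodule (Fin m) R n ⊓ (presKer g).restrictScalars R

/-- `(Q/Q⟨n-1⟩)_n`, the degree-`n` part of `Q/Q⟨n-1⟩`. -/
abbrev presE {m : ℕ} (g : Fin m → R) (n : ℕ) :=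
  presKerHomog g n ⧸
    Submodule.comap (presKerHomog g n).subtype ((presKerLe g (n - 1)).restrictScalars R)

end Defs

/-!
Write `g = (x₁, …, xₛ, y)` and let `Y` be the last variable. A form `F` of degree `n` is
`c Yⁿ + ∑ Xᵢ Hᵢ` with `c = F(0, …, 0, 1)`, so the values `c` taken by the equations of degree `n`
are exactly the elements of `(J Iⁿ⁻¹ : yⁿ)`. The colon conditions are what makes an equation
`∑ Xᵢ Hᵢ` without `Y`-term lie in `Q⟨n-1⟩`: the value of the last cofactor `Hᵢ` lies in
`(x₁, …, xᵢ₋₁) Iⁿ⁻²`, so modulo `Q⟨n-1⟩` the variable `Xᵢ` can be eliminated. Multiplication by `Y`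
does not change `c`, and therefore `F ∈ Q⟨n-1⟩` if and only if `c ∈ (J Iⁿ⁻² : yⁿ⁻¹)`.
The chain of ideals `(J Iⁿ : yⁿ⁺¹)` first reaches `R` at `n = r`, because
`Iⁿ⁺¹ = (yⁿ⁺¹) + J Iⁿ`; this gives the relation type and the generator of degree `r + 1`.
-/

lemma exists_quotient_equiv_of_map_eq {R M N : Type*} [Ring R] [AddCommGroup M] [Module R M]
    [AddCommGroup N] [Module R N] (f : M →ₗ[R] N) {P A : Submodule R M} {B C : Submodule R N}
    (hmap : P.map f = B) (hmem : ∀ p ∈ P, p ∈ A ↔ f p ∈ C) :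
    ∃ e : (P ⧸ A.comap P.subtype) ≃ₗ[R] (B ⧸ C.comap B.subtype), ∀ p (hp : p ∈ P),
      ∃ h : f p ∈ B, e (Submodule.Quotient.mk ⟨p, hp⟩) = Submodule.Quotient.mk ⟨f p, h⟩ := by
  subst hmap
  let φ : P →ₗ[R] (P.map f ⧸ C.comap (P.map f).subtype) := (Submodule.mkQ _).comp (f.submoduleMap P)
  have hsurj : Function.Surjective φ :=
    (Submodule.mkQ_surjective _).comp (f.submoduleMap_surjective P)
  have hker : A.comap P.subtype = LinearMap.ker φ := by
    ext p
    simpa [φ] using hmem p p.2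
  exact ⟨(Submodule.quotEquivOfEq _ _ hker).trans (φ.quotKerEquivOfSurjective hsurj),
    fun p hp => ⟨Submodule.mem_map_of_mem hp, rfl⟩⟩

section Forms

/-- The forms of degree `n + 1` in the ideal generated by the variables `X i`, `i ∈ S`; the index
`n` is the degree of the cofactors of the variables. -/
noncomputable def formsIn (R : Type*) [CommSemiring R] {σ : Type*} (S : Set σ) (n : ℕ) :
    Submodule R (MvPolynomial σ R) :=
  Submodule.span R (X '' S) * homogeneousSubmodule σ R n

variable {σ R : Type*} [CommSemiring R]

lemma formsIn_univ (n : ℕ) : formsIn R (Set.univ : Set σ) n = homogeneousSubmodule σ R (n + 1) := by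
  rw [formsIn, Set.image_univ, ← homogeneousSubmodule_one_eq_span_X,
    ← homogeneousSubmodule_one_pow R n, ← homogeneousSubmodule_one_pow R (n + 1), pow_succ']

lemma formsIn_le_homogeneousSubmodule (S : Set σ) (n : ℕ) :
    formsIn R S n ≤ homogeneousSubmodule σ R (n + 1) := by
  rw [← formsIn_univ]
  exact mul_le_mul_left (Submodule.span_mono (Set.image_mono (Set.subset_univ S))) _

lemma formsIn_insert (i : σ) (S : Set σ) (n : ℕ) :
    formsIn R (insert i S) n
      = Submodule.span R {X i} * homogeneousSubmodule σ R n ⊔ formsIn R S n := by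
  rw [formsIn, Set.image_insert_eq, Submodule.span_insert, Submodule.sup_mul, formsIn]

lemma span_X_mul_formsIn_le (i : σ) (S : Set σ) (n : ℕ) :
    Submodule.span R {X i} * formsIn R S n ≤ formsIn R S (n + 1) := by
  have hX : Submodule.span R {X i} ≤ homogeneousSubmodule σ R 1 := by
    simpa using isHomogeneous_X R i
  calc Submodule.span R {X i} * formsIn R S n
      = Submodule.span R (X '' S) * (homogeneousSubmodule σ R n * Submodule.span R {X i}) := by
        rw [formsIn, mul_comm, mul_assoc]
    _ ≤ formsIn R S (n + 1) :=
        mul_le_mul_right ((mul_le_mul_right hX _).trans (homogeneousSubmodule_mul n 1)) _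

lemma map_aeval_formsIn (g : σ → R) (S : Set σ) (n : ℕ) :
    (formsIn R S n).map (aeval g).toLinearMap
      = Ideal.span (g '' S) * Ideal.span (Set.range g) ^ n := by
  rw [formsIn, Submodule.map_mul, Ideal.span_pow_eq_map_homogeneousSubmodule, Submodule.map_span]
  congr
  simp [Set.image_image]

lemma mem_span_image_mul_span_range_pow_iff {g : σ → R} {S : Set σ} {n : ℕ} {a : R} :
    a ∈ Ideal.span (g '' S) * Ideal.span (Set.range g) ^ n ↔ ∃ F ∈ formsIn R S n, eval g F = a := by
  rw [← map_aeval_formsIn]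
  rfl

lemma homogeneousSubmodule_succ_eq_sup (k : σ) (n : ℕ) :
    homogeneousSubmodule σ R (n + 1)
      = Submodule.span R {X k ^ (n + 1)} ⊔ formsIn R {k}ᶜ n := by
  have hsplit (n : ℕ) : homogeneousSubmodule σ R (n + 1)
      = Submodule.span R {X k} * homogeneousSubmodule σ R n ⊔ formsIn R {k}ᶜ n := by
    rw [← formsIn_insert, ← Set.singleton_union, Set.union_compl_self, formsIn_univ]
  induction n with
  | zero =>
    rw [hsplit, ← homogeneousSubmodule_one_pow R 0, pow_zero, mul_one, zero_add, pow_one]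
  | succ n ih =>
    rw [hsplit, ih, Submodule.mul_sup, Submodule.span_mul_span, Set.singleton_mul_singleton,
      ← pow_succ', sup_assoc,
      sup_of_le_right (span_X_mul_formsIn_le (R := R) k {k}ᶜ n)]

lemma exists_sum_of_mem_formsIn_range {ι : Type*} [Fintype ι] {v : ι → σ} {n : ℕ}
    {F : MvPolynomial σ R} (hF : F ∈ formsIn R (Set.range v) n) :
    ∃ H : ι → MvPolynomial σ R, (∀ i, (H i).IsHomogeneous n) ∧ F = ∑ i, X (v i) * H i := by
  rw [formsIn, ← Set.range_comp, Submodule.span_range_eq_iSup, Submodule.iSup_mul] at hF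
  obtain ⟨f, hf, rfl⟩ := (Submodule.mem_iSup_iff_exists_finsupp _ _).1 hF
  choose H hH hHf using fun i => Submodule.mem_span_singleton_mul.1 (hf i)
  exact ⟨H, hH, by simp [Finsupp.sum_fintype, ← hHf]⟩

section PureCoeff

variable [DecidableEq σ] (k : σ)

/-- Evaluation at the `k`-th coordinate vector. On a form of degree `n` this is the coefficient
of `X k ^ n`. -/
noncomputable def pureCoeff : MvPolynomial σ R →ₐ[R] R :=
  aeval (Pi.single k 1)

@[simp]
lemma pureCoeff_X_self : pureCoeff k (X k : MvPolynomial σ R) = 1 := by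
  simp [pureCoeff]

lemma pureCoeff_of_mem_formsIn {n : ℕ} {F : MvPolynomial σ R} (hF : F ∈ formsIn R {k}ᶜ n) :
    pureCoeff k F = 0 := by
  have hspan : Ideal.span ((Pi.single k 1 : σ → R) '' {k}ᶜ) = ⊥ := by
    rw [Ideal.span_eq_bot]
    rintro _ ⟨i, hi, rfl⟩
    exact Pi.single_eq_of_ne hi 1
  have hmem := Submodule.mem_map_of_mem (f := (pureCoeff k).toLinearMap) hF
  rwa [pureCoeff, map_aeval_formsIn, hspan, Submodule.bot_mul, Submodule.mem_bot] at hmem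

lemma sub_pureCoeff_smul_mem_formsIn {R : Type*} [CommRing R] {n : ℕ} {F : MvPolynomial σ R}
    (hF : F.IsHomogeneous (n + 1)) : F - pureCoeff k F • X k ^ (n + 1) ∈ formsIn R {k}ᶜ n := by
  rw [← mem_homogeneousSubmodule, homogeneousSubmodule_succ_eq_sup k] at hF
  obtain ⟨_, hP, G, hG, rfl⟩ := Submodule.mem_sup.1 hF
  obtain ⟨c, rfl⟩ := Submodule.mem_span_singleton.1 hP
  simpa [pureCoeff_of_mem_formsIn k hG] using hG

end PureCoeff

end Forms

section Equations

variable {R : Type*} [CommRing R] {m : ℕ} {g : Fin m → R}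

lemma reesPres_monomial (d : Fin m →₀ ℕ) (a : R) :
    reesPres g (monomial d a) = Polynomial.C (eval g (monomial d a)) * Polynomial.X ^ d.degree := by
  simp only [reesPres, aeval_monomial, eval_monomial, Finsupp.prod, mul_pow,
    Finset.prod_mul_distrib, Finset.prod_pow_eq_pow_sum, Finsupp.degree, map_mul, map_prod,
    map_pow, mul_assoc]
  rfl

lemma coeff_reesPres (F : MvPolynomial (Fin m) R) (n : ℕ) :
    (reesPres g F).coeff n = eval g (homogeneousComponent n F) := by
  induction F using MvPolynomial.induction_on' with
  | monomial d a =>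
    rw [reesPres_monomial, Polynomial.coeff_C_mul_X_pow,
      homogeneousComponent_of_mem (isHomogeneous_monomial a rfl)]
    split_ifs <;> simp
  | add F G hF hG => simp [hF, hG]

lemma mem_presKer_iff {F : MvPolynomial (Fin m) R} :
    F ∈ presKer g ↔ ∀ n, eval g (homogeneousComponent n F) = 0 := by
  simp only [presKer, RingHom.mem_ker, Polynomial.ext_iff, coeff_reesPres, Polynomial.coeff_zero]

lemma mem_presKer_iff_of_isHomogeneous {F : MvPolynomial (Fin m) R} {n : ℕ}
    (hF : F.IsHomogeneous n) : F ∈ presKer g ↔ eval g F = 0 := by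
  rw [mem_presKer_iff]
  refine ⟨fun h => by simpa [homogeneousComponent_eq_self hF] using h n, fun h i => ?_⟩
  rw [homogeneousComponent_of_mem hF]
  split_ifs <;> simp [h]

lemma mem_presKerHomog_iff {F : MvPolynomial (Fin m) R} {n : ℕ} :
    F ∈ presKerHomog g n ↔ F.IsHomogeneous n ∧ eval g F = 0 :=
  and_congr_right mem_presKer_iff_of_isHomogeneous

lemma presKerHomog_zero : presKerHomog g 0 = ⊥ := by
  refine eq_bot_iff.2 fun F hF => ?_
  obtain ⟨hdeg, heval⟩ := mem_presKerHomog_iff.1 hF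
  rw [totalDegree_eq_zero_iff_eq_C.1 ((totalDegree_zero_iff_isHomogeneous _).2 hdeg)] at heval ⊢
  simpa using heval

lemma X_mul_mem_presKerHomog (i : Fin m) {F : MvPolynomial (Fin m) R} {n : ℕ}
    (hF : F ∈ presKerHomog g n) : X i * F ∈ presKerHomog g (n + 1) :=
  ⟨add_comm 1 n ▸ (isHomogeneous_X R i).mul hF.1, Ideal.mul_mem_left _ _ hF.2⟩

lemma homogeneousComponent_mem_presKerHomog {F : MvPolynomial (Fin m) R} (hF : F ∈ presKer g)
    (n : ℕ) : homogeneousComponent n F ∈ presKerHomog g n :=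
  mem_presKerHomog_iff.2 ⟨homogeneousComponent_isHomogeneous n F, mem_presKer_iff.1 hF n⟩

lemma presKer_le {A : Ideal (MvPolynomial (Fin m) R)}
    (h : ∀ n, presKerHomog g n ≤ A.restrictScalars R) : presKer g ≤ A := by
  intro F hF
  rw [← sum_homogeneousComponent F]
  exact Ideal.sum_mem _ fun n _ => h n (homogeneousComponent_mem_presKerHomog hF n)

lemma presKerLe_le_iff {A : Ideal (MvPolynomial (Fin m) R)} {d : ℕ} :
    presKerLe g d ≤ A ↔ ∀ n ≤ d, presKerHomog g n ≤ A.restrictScalars R := by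
  rw [presKerLe, Ideal.span_le]
  exact ⟨fun h n hn F hF => h ⟨hF.2, n, hn, hF.1⟩,
    fun h F ⟨hFQ, n, hn, hF⟩ => h n hn ⟨hF, hFQ⟩⟩

lemma presKerHomog_le_presKerLe {n d : ℕ} (h : n ≤ d) :
    presKerHomog g n ≤ (presKerLe g d).restrictScalars R :=
  presKerLe_le_iff.1 le_rfl n h

lemma presKerLe_le_presKer (d : ℕ) : presKerLe g d ≤ presKer g :=
  presKerLe_le_iff.2 fun _ _ => inf_le_right

lemma presKer_eq_presKerLe {N : ℕ}
    (h : ∀ n, N ≤ n → presKerHomog g (n + 1) ≤ (presKerLe g n).restrictScalars R) :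
    presKer g = presKerLe g N := by
  refine le_antisymm (presKer_le fun n => ?_) (presKerLe_le_presKer N)
  induction n using Nat.strong_induction_on with
  | _ n ih =>
    rcases le_or_gt n N with hn | hn
    · exact presKerHomog_le_presKerLe hn
    · obtain ⟨c, rfl⟩ := Nat.exists_eq_add_of_lt hn
      exact (h (N + c) (by omega)).trans (presKerLe_le_iff.2 fun i hi => ih i (by omega))

end Equations

section LeadIdeal

variable {R : Type*} [CommRing R] {m : ℕ}

/-- The colon ideal `(J Iⁿ : yⁿ⁺¹)`, where `I` is generated by the family `g`, `y = g k` and `J` is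
generated by the remaining members of the family. -/
def leadIdeal (g : Fin m → R) (k : Fin m) (n : ℕ) : Ideal R :=
  (Ideal.span (g '' {k}ᶜ) * Ideal.span (Set.range g) ^ n).colon (Ideal.span {g k ^ (n + 1)})

variable {g : Fin m → R} {k : Fin m} {n : ℕ}

lemma mem_leadIdeal {a : R} :
    a ∈ leadIdeal g k n ↔
      a * g k ^ (n + 1) ∈ Ideal.span (g '' {k}ᶜ) * Ideal.span (Set.range g) ^ n :=
  Ideal.mem_colon_span_singleton

lemma leadIdeal_mono : Monotone (leadIdeal g k) := by
  refine monotone_nat_of_le_succ fun n a ha => ?_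
  rw [mem_leadIdeal] at ha ⊢
  rw [pow_succ (g k), pow_succ (Ideal.span _), ← mul_assoc, ← mul_assoc]
  exact Ideal.mul_mem_mul ha (Ideal.subset_span ⟨k, rfl⟩)

lemma span_pow_succ_eq_sup :
    Ideal.span (Set.range g) ^ (n + 1) =
      Ideal.span {g k ^ (n + 1)} ⊔ Ideal.span (g '' {k}ᶜ) * Ideal.span (Set.range g) ^ n := by
  rw [Ideal.span_pow_eq_map_homogeneousSubmodule, homogeneousSubmodule_succ_eq_sup k,
    Submodule.map_sup, map_aeval_formsIn, Submodule.map_span]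
  simp

lemma leadIdeal_eq_top_iff :
    leadIdeal g k n = ⊤ ↔ Ideal.span (Set.range g) ^ (n + 1)
      = Ideal.span (g '' {k}ᶜ) * Ideal.span (Set.range g) ^ n := by
  rw [Ideal.eq_top_iff_one, mem_leadIdeal, one_mul, span_pow_succ_eq_sup (k := k), sup_eq_right,
    Ideal.span_singleton_le_iff_mem]

lemma map_pureCoeff_presKerHomog :
    (presKerHomog g (n + 1)).map (pureCoeff k).toLinearMap = leadIdeal g k n := by
  ext a
  rw [mem_leadIdeal, mem_span_image_mul_span_range_pow_iff]
  constructor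
  · rintro ⟨F, hF, rfl⟩
    refine ⟨_, neg_mem (sub_pureCoeff_smul_mem_formsIn k hF.1), ?_⟩
    simp [(mem_presKerHomog_iff.1 hF).2]
  · rintro ⟨H, hH, hHa⟩
    refine ⟨a • X k ^ (n + 1) - H, mem_presKerHomog_iff.2 ⟨?_, by simp [hHa]⟩, ?_⟩
    · exact sub_mem (Submodule.smul_mem _ _ (isHomogeneous_X_pow k (n + 1)))
        (formsIn_le_homogeneousSubmodule _ n hH)
    · simp [pureCoeff_of_mem_formsIn k hH]

lemma presKerLe_le_comap_leadIdeal :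
    presKerLe g (n + 1) ≤ (leadIdeal g k n).comap (pureCoeff k) := by
  refine presKerLe_le_iff.2 fun i hi => ?_
  cases i with
  | zero => simp [presKerHomog_zero]
  | succ i =>
    exact Submodule.map_le_iff_le_comap.1 <|
      map_pureCoeff_presKerHomog.le.trans (leadIdeal_mono (by omega))

end LeadIdeal

section ColonCondition

variable {R : Type*} [CommRing R]

/-- The paper's condition `(𝒯ₙ₊₂)` at the single index `i`, with `I` the ideal generated by all of
`g`. Only one inclusion is recorded, the other one being automatic. -/
def ColonCondition {m : ℕ} (g : Fin m → R) (i : Fin m) (n : ℕ) : Prop :=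
  (Ideal.span (g '' Set.Iio i) * Ideal.span (Set.range g) ^ (n + 1)).colon
      (Ideal.span {g i}) ⊓ Ideal.span (Set.range g) ^ (n + 1)
    ≤ Ideal.span (g '' Set.Iio i) * Ideal.span (Set.range g) ^ n

lemma ColonCondition.exists_sub_mem_presKerHomog {m n : ℕ} {g : Fin m → R} {i : Fin m}
    (hi : ColonCondition g i n) {H G : MvPolynomial (Fin m) R} (hH : H.IsHomogeneous (n + 1))
    (hG : G ∈ formsIn R (Set.Iio i) (n + 1)) (hker : eval g (X i * H + G) = 0) :
    ∃ K ∈ formsIn R (Set.Iio i) n, H - K ∈ presKerHomog g (n + 1) := by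
  have hcolon : eval g H * g i ∈
      Ideal.span (g '' Set.Iio i) * Ideal.span (Set.range g) ^ (n + 1) := by
    refine mem_span_image_mul_span_range_pow_iff.2 ⟨-G, neg_mem hG, ?_⟩
    simp only [map_add, map_mul, eval_X] at hker
    rw [map_neg]
    linear_combination -hker
  have hpow : eval g H ∈ Ideal.span (Set.range g) ^ (n + 1) :=
    (Ideal.mem_span_pow_iff_exists_isHomogeneous g _).2 ⟨H, hH, rfl⟩
  obtain ⟨K, hK, hKH⟩ := mem_span_image_mul_span_range_pow_iff.1
    (hi ⟨Ideal.mem_colon_span_singleton.2 hcolon, hpow⟩)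
  refine ⟨K, hK, mem_presKerHomog_iff.2 ⟨hH.sub (formsIn_le_homogeneousSubmodule _ n hK), ?_⟩⟩
  simp [hKH]

variable {s n : ℕ} {g : Fin (s + 1) → R}

/-- By induction on `k`: in an equation `X i * H + G` with `G` in the variables before `X i`, the
colon condition replaces `H`, modulo an equation of degree `n + 1`, by a form in those variables. -/
lemma formsIn_Iio_inf_presKer_le {k : Fin (s + 1)} (hT : ∀ i < k, ColonCondition g i n) :
    formsIn R (Set.Iio k) (n + 1) ⊓ (presKer g).restrictScalars R
      ≤ (presKerLe g (n + 1)).restrictScalars R := by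
  induction k using Fin.induction with
  | zero =>
    simp [formsIn]
  | succ i ih =>
    have hIio : Set.Iio i.succ = insert i.castSucc (Set.Iio i.castSucc) := by
      ext j
      simp only [Set.mem_Iio, Set.mem_insert_iff, Fin.lt_def, Fin.ext_iff, Fin.val_succ,
        Fin.val_castSucc]
      omega
    rintro F ⟨hF, hFQ⟩
    have hFdeg := formsIn_le_homogeneousSubmodule _ _ hF
    rw [SetLike.mem_coe, hIio, formsIn_insert] at hF
    obtain ⟨_, hXH, G, hG, rfl⟩ := Submodule.mem_sup.1 hF
    obtain ⟨H, hH, rfl⟩ := Submodule.mem_span_singleton_mul.1 hXH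
    obtain ⟨K, hK, hHK⟩ := (hT _ i.castSucc_lt_succ).exists_sub_mem_presKerHomog hH hG
      ((mem_presKer_iff_of_isHomogeneous hFdeg).1 hFQ)
    have hXHK : X i.castSucc * (H - K) ∈ presKerLe g (n + 1) :=
      Ideal.mul_mem_left _ _ (presKerHomog_le_presKerLe le_rfl hHK)
    have hsplit : X i.castSucc * H + G = X i.castSucc * (H - K) + (X i.castSucc * K + G) := by ring
    rw [hsplit] at hFQ ⊢
    refine add_mem hXHK (ih (fun j hj => hT j (hj.trans i.castSucc_lt_succ)) ⟨?_, ?_⟩)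
    · exact add_mem (span_X_mul_formsIn_le _ _ n
        (Submodule.mul_mem_mul (Submodule.mem_span_singleton_self _) hK)) hG
    · exact (Ideal.add_mem_iff_right _ (presKerLe_le_presKer _ hXHK)).1 hFQ

lemma mem_presKerLe_of_pureCoeff_eq_zero (hT : ∀ i < Fin.last s, ColonCondition g i n)
    {F : MvPolynomial (Fin (s + 1)) R} (hF : F ∈ presKerHomog g (n + 2))
    (hcoeff : pureCoeff (Fin.last s) F = 0) : F ∈ presKerLe g (n + 1) := by
  have hforms := sub_pureCoeff_smul_mem_formsIn (Fin.last s) hF.1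
  rw [hcoeff, zero_smul, sub_zero, ← Fin.top_eq_last, ← Set.Iio_top] at hforms
  exact formsIn_Iio_inf_presKer_le hT ⟨hforms, hF.2⟩

lemma mem_presKerLe_iff_pureCoeff_mem_leadIdeal (hT : ∀ i < Fin.last s, ColonCondition g i n)
    {F : MvPolynomial (Fin (s + 1)) R} (hF : F ∈ presKerHomog g (n + 2)) :
    F ∈ presKerLe g (n + 1) ↔ pureCoeff (Fin.last s) F ∈ leadIdeal g (Fin.last s) n := by
  refine ⟨fun h => presKerLe_le_comap_leadIdeal h, fun h => ?_⟩
  rw [← map_pureCoeff_presKerHomog] at h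
  obtain ⟨G, hG, hGF⟩ := h
  have hYG : X (Fin.last s) * G ∈ presKerLe g (n + 1) :=
    Ideal.mul_mem_left _ _ (presKerHomog_le_presKerLe le_rfl hG)
  refine (Submodule.sub_mem_iff_left _ hYG).1 (mem_presKerLe_of_pureCoeff_eq_zero hT
    (sub_mem hF (X_mul_mem_presKerHomog _ hG)) ?_)
  simpa [sub_eq_zero] using hGF.symm

end ColonCondition

section RelationType

variable {R : Type*} [CommRing R] {s n : ℕ} {g : Fin (s + 1) → R}

lemma exists_presE_equiv (hT : ∀ i < Fin.last s, ColonCondition g i n) :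
    ∃ e : presE g (n + 2) ≃ₗ[R] (leadIdeal g (Fin.last s) (n + 1) ⧸
        Submodule.comap (leadIdeal g (Fin.last s) (n + 1)).subtype (leadIdeal g (Fin.last s) n)),
      ∀ (F : MvPolynomial (Fin (s + 1)) R) (hF : F ∈ presKerHomog g (n + 2)),
        ∃ h : pureCoeff (Fin.last s) F ∈ leadIdeal g (Fin.last s) (n + 1),
          e (Submodule.Quotient.mk ⟨F, hF⟩)
            = Submodule.Quotient.mk ⟨pureCoeff (Fin.last s) F, h⟩ :=
  exists_quotient_equiv_of_map_eq (pureCoeff (Fin.last s)).toLinearMap map_pureCoeff_presKerHomog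
    fun _ hF => mem_presKerLe_iff_pureCoeff_mem_leadIdeal hT hF

lemma leadIdeal_le_of_presKer_eq_presKerLe {m : ℕ} {g : Fin m → R} (k : Fin m)
    (h : presKer g = presKerLe g (n + 1)) (j : ℕ) : leadIdeal g k j ≤ leadIdeal g k n := by
  rw [← map_pureCoeff_presKerHomog, Submodule.map_le_iff_le_comap]
  exact fun F hF => presKerLe_le_comap_leadIdeal (h ▸ hF.2)

lemma isLeast_presKer_eq_presKerLe (hT : ∀ n, ∀ i < Fin.last s, ColonCondition g i n) {r : ℕ}
    (hr : IsLeast {n | leadIdeal g (Fin.last s) n = ⊤} r) :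
    IsLeast {N | 1 ≤ N ∧ presKer g = presKerLe g N} (r + 1) := by
  refine ⟨⟨by omega, presKer_eq_presKerLe fun n hn F hF => ?_⟩, fun N ⟨hN, hQ⟩ => ?_⟩
  · obtain ⟨c, rfl⟩ := Nat.exists_eq_add_of_le' hn
    have htop : leadIdeal g (Fin.last s) (c + r) = ⊤ :=
      top_le_iff.1 (hr.1.ge.trans (leadIdeal_mono (Nat.le_add_left r c)))
    exact (mem_presKerLe_iff_pureCoeff_mem_leadIdeal (hT _) hF).2 (htop ▸ Submodule.mem_top)
  · obtain ⟨n, rfl⟩ := Nat.exists_eq_add_of_le' hN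
    have htop : leadIdeal g (Fin.last s) n = ⊤ :=
      top_le_iff.1 (hr.1.ge.trans (leadIdeal_le_of_presKer_eq_presKerLe _ hQ r))
    exact Nat.succ_le_succ (hr.2 htop)

lemma presKer_eq_span_singleton_sup (hT : ∀ i < Fin.last s, ColonCondition g i n)
    (hQ : presKer g = presKerLe g (n + 2)) {G : MvPolynomial (Fin (s + 1)) R}
    (hG : G ∈ presKerHomog g (n + 2)) (hcoeff : pureCoeff (Fin.last s) G = 1) :
    presKer g = Ideal.span {G} ⊔ presKerLe g (n + 1) := by
  refine le_antisymm ?_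
    (sup_le ((Ideal.span_singleton_le_iff_mem _).2 hG.2) (presKerLe_le_presKer _))
  rw [hQ, presKerLe_le_iff]
  intro d hd F hF
  rcases hd.lt_or_eq with hd | rfl
  · exact Ideal.mem_sup_right (presKerHomog_le_presKerLe (by omega) hF)
  · have hcG : pureCoeff (Fin.last s) F • G ∈ Ideal.span {G} :=
      Submodule.smul_of_tower_mem _ _ (Ideal.mem_span_singleton_self G)
    have hsub : F - pureCoeff (Fin.last s) F • G ∈ presKerLe g (n + 1) :=
      mem_presKerLe_of_pureCoeff_eq_zero hT (sub_mem hF (Submodule.smul_mem _ _ hG))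
        (by simp [hcoeff])
    exact (Submodule.sub_mem_iff_left _ (Ideal.mem_sup_left hcG)).1 (Ideal.mem_sup_right hsub)

lemma exists_X_pow_sub_sum_mem_presKerHomog (htop : leadIdeal g (Fin.last s) n = ⊤) :
    ∃ F : Fin s → MvPolynomial (Fin (s + 1)) R, (∀ i, (F i).IsHomogeneous n) ∧
      X (Fin.last s) ^ (n + 1) - ∑ i, X i.castSucc * F i ∈ presKerHomog g (n + 1) ∧
      pureCoeff (Fin.last s) (X (Fin.last s) ^ (n + 1) - ∑ i, X i.castSucc * F i) = 1 := by
  obtain ⟨G, hG, hG1⟩ :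
      (1 : R) ∈ (presKerHomog g (n + 1)).map (pureCoeff (Fin.last s)).toLinearMap :=
    map_pureCoeff_presKerHomog.trans htop ▸ Submodule.mem_top
  have hcoeff : pureCoeff (Fin.last s) G = 1 := hG1
  have hforms := neg_mem (sub_pureCoeff_smul_mem_formsIn (Fin.last s) hG.1)
  rw [hcoeff, one_smul, neg_sub, ← Fin.range_succAbove, Fin.succAbove_last] at hforms
  obtain ⟨F, hF, hsum⟩ := exists_sum_of_mem_formsIn_range hforms
  refine ⟨F, hF, ?_⟩
  rw [← hsum, sub_sub_cancel]
  exact ⟨hG, hcoeff⟩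

end RelationType

section Snoc

variable {R : Type*} {s : ℕ} (x : Fin s → R) (y : R)

lemma snoc_image_compl_last :
    (Fin.snoc x y : Fin (s + 1) → R) '' {Fin.last s}ᶜ = Set.range x := by
  rw [← Fin.range_succAbove, Fin.succAbove_last, ← Set.range_comp, Fin.snoc_comp_castSucc]

lemma snoc_image_Iio_castSucc (i : Fin s) :
    (Fin.snoc x y : Fin (s + 1) → R) '' Set.Iio i.castSucc = x '' {j | j < i} := by
  rw [← Fin.image_castSucc_Iio, ← Set.image_comp, Fin.snoc_comp_castSucc]
  rfl

end Snoc

theorem statement0_general {R : Type*} [CommRing R]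
    (I : Ideal R) {s : ℕ} (x : Fin s → R) (y : R) (r : ℕ)
    (J : Ideal R) (hJ : J = Ideal.span (Set.range x))
    (hgen : I = Ideal.span (Set.range (Fin.snoc x y)))
    (hIJ : I ≠ J)
    (hred : IsLeast {k : ℕ | I ^ (k + 1) = J * I ^ k} r)
    (hT : ∀ n, 2 ≤ n → ∀ i : Fin s,
      (Ideal.span (x '' {j | j < i}) * I ^ (n - 1)).colon (Ideal.span {x i}) ⊓ I ^ (n - 1)
        ≤ Ideal.span (x '' {j | j < i}) * I ^ (n - 2)) :
    (∀ n, 2 ≤ n →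
      ∃ e : presE (Fin.snoc x y) n ≃ₗ[R]
          (((J * I ^ (n - 1)).colon (Ideal.span {y ^ n})) ⧸
            Submodule.comap ((J * I ^ (n - 1)).colon (Ideal.span {y ^ n})).subtype
              ((J * I ^ (n - 2)).colon (Ideal.span {y ^ (n - 1)}))),
        ∀ (F : MvPolynomial (Fin (s + 1)) R) (hF : F ∈ presKerHomog (Fin.snoc x y) n),
          ∃ h : MvPolynomial.eval (Function.update (0 : Fin (s + 1) → R) (Fin.last s) 1) F
              ∈ (J * I ^ (n - 1)).colon (Ideal.span {y ^ n}),
            e (Submodule.Quotient.mk ⟨F, hF⟩)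
              = Submodule.Quotient.mk
                  ⟨MvPolynomial.eval (Function.update (0 : Fin (s + 1) → R) (Fin.last s) 1) F,
                    h⟩) ∧
    IsLeast {N : ℕ | 1 ≤ N ∧ presKer (Fin.snoc x y) = presKerLe (Fin.snoc x y) N} (r + 1) ∧
    ∃ F : Fin s → MvPolynomial (Fin (s + 1)) R, (∀ i, (F i).IsHomogeneous r) ∧
      (X (Fin.last s) ^ (r + 1) - ∑ i, X i.castSucc * F i) ∈ presKer (Fin.snoc x y) ∧
      presKer (Fin.snoc x y)
        = Ideal.span {X (Fin.last s) ^ (r + 1) - ∑ i, X i.castSucc * F i}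
            ⊔ presKerLe (Fin.snoc x y) r := by
  have hcolon (n : ℕ) :
      ∀ i < Fin.last s, ColonCondition (Fin.snoc x y : Fin (s + 1) → R) i n := fun i hi => by
    obtain ⟨i, rfl⟩ := Fin.exists_castSucc_eq.2 hi.ne
    rw [ColonCondition, snoc_image_Iio_castSucc, Fin.snoc_castSucc, ← hgen]
    exact hT (n + 2) (by omega) i
  have hlead (n : ℕ) : leadIdeal (Fin.snoc x y : Fin (s + 1) → R) (Fin.last s) n
      = (J * I ^ n).colon (Ideal.span {y ^ (n + 1)}) := by
    rw [leadIdeal, snoc_image_compl_last, Fin.snoc_last, hJ, hgen]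
  have hleast :
      IsLeast {k | leadIdeal (Fin.snoc x y : Fin (s + 1) → R) (Fin.last s) k = ⊤} r := by
    simpa only [leadIdeal_eq_top_iff, snoc_image_compl_last, ← hJ, ← hgen] using hred
  have hrt := isLeast_presKer_eq_presKerLe hcolon hleast
  refine ⟨fun n hn => ?_, hrt, ?_⟩
  · obtain ⟨n, rfl⟩ := Nat.exists_eq_add_of_le' hn
    have hequiv := exists_presE_equiv (hcolon n)
    rw [hlead, hlead] at hequiv
    exact hequiv
  · obtain ⟨F, hF, hG, hcoeff⟩ := exists_X_pow_sub_sum_mem_presKerHomog hleast.1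
    cases r with
    | zero => exact absurd (by simpa using hred.1) hIJ
    | succ q => exact ⟨F, hF, hG.2, presKer_eq_span_singleton_sup (hcolon q) hrt.1.2 hG hcoeff⟩

/-- **Theorem A.**  Let `(R,m)` be a Noetherian local ring, `I` an ideal of `R` with minimal
generating set `x₁,…,xₛ,y`, where `J = (x₁,…,xₛ)` is a reduction of `I` with reduction number
`r`.  Assume condition `(𝒯ₙ)` for all `n ≥ 2`.  Then for each `n ≥ 2`, `F ↦ F(0,…,0,1)`
induces an isomorphism `(Q/Q⟨n-1⟩)ₙ ≅ (JIⁿ⁻¹ : yⁿ)/(JIⁿ⁻² : yⁿ⁻¹)`; in particular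
`rt(I) = r + 1` and `Q = (Y^(r+1) - ∑ Xᵢ Fᵢ) + Q⟨r⟩` for suitable forms `Fᵢ` of degree `r`. -/
theorem statement0 {R : Type*} [CommRing R] [IsNoetherianRing R] [IsLocalRing R]
    (I : Ideal R) {s : ℕ} (x : Fin s → R) (y : R) (r : ℕ)
    (J : Ideal R) (hJ : J = Ideal.span (Set.range x))
    (hgen : I = Ideal.span (Set.range (Fin.snoc x y)))
    (hmin : ∀ i : Fin (s + 1), I ≠ Ideal.span (Fin.snoc x y '' {j | j ≠ i}))
    (hred : IsLeast {k : ℕ | I ^ (k + 1) = J * I ^ k} r)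
    (hT : ∀ n, 2 ≤ n → ∀ i : Fin s,
      (Ideal.span (x '' {j | j < i}) * I ^ (n - 1)).colon (Ideal.span {x i}) ⊓ I ^ (n - 1)
        = Ideal.span (x '' {j | j < i}) * I ^ (n - 2)) :
    (∀ n, 2 ≤ n →
      ∃ e : presE (Fin.snoc x y) n ≃ₗ[R]
          (((J * I ^ (n - 1)).colon (Ideal.span {y ^ n})) ⧸
            Submodule.comap ((J * I ^ (n - 1)).colon (Ideal.span {y ^ n})).subtype
              ((J * I ^ (n - 2)).colon (Ideal.span {y ^ (n - 1)}))),
        ∀ (F : MvPolynomial (Fin (s + 1)) R) (hF : F ∈ presKerHomog (Fin.snoc x y) n),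
          ∃ h : MvPolynomial.eval (Function.update (0 : Fin (s + 1) → R) (Fin.last s) 1) F
              ∈ (J * I ^ (n - 1)).colon (Ideal.span {y ^ n}),
            e (Submodule.Quotient.mk ⟨F, hF⟩)
              = Submodule.Quotient.mk
                  ⟨MvPolynomial.eval (Function.update (0 : Fin (s + 1) → R) (Fin.last s) 1) F,
                    h⟩) ∧
    IsLeast {N : ℕ | 1 ≤ N ∧ presKer (Fin.snoc x y) = presKerLe (Fin.snoc x y) N} (r + 1) ∧
    ∃ F : Fin s → MvPolynomial (Fin (s + 1)) R, (∀ i, (F i).IsHomogeneous r) ∧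
      (X (Fin.last s) ^ (r + 1) - ∑ i, X i.castSucc * F i) ∈ presKer (Fin.snoc x y) ∧
      presKer (Fin.snoc x y)
        = Ideal.span {X (Fin.last s) ^ (r + 1) - ∑ i, X i.castSucc * F i}
            ⊔ presKerLe (Fin.snoc x y) r := by
  have hIJ : I ≠ J := by rw [hJ, ← snoc_image_compl_last x y]; exact hmin (Fin.last s)
  exact statement0_general I x y r J hJ hgen hIJ hred fun n hn i => (hT n hn i).le
end

section
/- Let (R,m) be a Noetherian local ring and I an ideal of R. Let x_1,…,x_s ∈ I be an R-regular sequence whose initial forms x_1*,…,x_{s-1}* in I/I^2 form a gr_I(R)-regular sequence. Then for all n ≥ 2 and all i = 1,…,s one has ((x_1,…,x_{i-1})I^{n-1} : x_i) ∩ I^{n-1} = (x_1,…,x_{i-1})I^{n-2}. -/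
set_option synthInstance.maxHeartbeats 1000000
set_option maxHeartbeats 1000000

section Defs

variable {R : Type*} [CommRing R]

/-- The ideal `I·R(I)` of the Rees algebra `R(I) = R[It] ⊆ R[t]`. -/
noncomputable def grIdeal (I : Ideal R) : Ideal (reesAlgebra I) :=
  Ideal.span ((algebraMap R (reesAlgebra I)) '' (I : Set R))

/-- The associated graded ring `gr_I(R) = ⊕ₙ Iⁿ/Iⁿ⁺¹`, realized as `R(I)/I·R(I)`. -/
abbrev GrRing (I : Ideal R) := reesAlgebra I ⧸ grIdeal I

end Defs

/-!
Write `J = (x₁,…,x_{i-1})`. If `a xᵢ ∈ J Iⁿ⁻¹`, then regularity of the sequence in `R` gives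
`a ∈ J`, so everything rests on the Valabrega–Valla equality `J ∩ Iᵖ⁺¹ = J Iᵖ`. Regularity of the
initial forms says, degree by degree, that `a xₖ ∈ (x₁,…,x_{k-1}) Iᵖ + Iᵖ⁺²` with `a ∈ Iᵖ` forces
`a ∈ (x₁,…,x_{k-1}) Iᵖ⁻¹ + Iᵖ⁺¹`. Given `w + a xₖ ∈ Iᵖ⁺²` with `w ∈ (x₁,…,x_{k-1}) Iᵖ`, one can
therefore replace `a` by an element of `Iᵖ⁺¹` at the cost of changing `w`, and then induct on `k`
to push `w` into `(x₁,…,x_{k-1}) Iᵖ⁺¹`.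
-/

open Polynomial RingTheory.Sequence

section RegularSequences

variable {R : Type*} [CommRing R]

lemma isWeaklyRegular_take {M : Type*} [AddCommGroup M] [Module R M] {rs : List R}
    (h : IsWeaklyRegular M rs) (k : ℕ) : IsWeaklyRegular M (rs.take k) := by
  rw [← List.take_append_drop k rs, isWeaklyRegular_append_iff] at h
  exact h.1

lemma isSMulRegular_quotient_smul_top_iff (J : Ideal R) (r : R) :
    IsSMulRegular (R ⧸ (J • ⊤ : Submodule R R)) r ↔ ∀ a, a * r ∈ J → a ∈ J := by
  simp only [isSMulRegular_quotient_iff_mem_of_smul_mem, smul_eq_mul, Ideal.mul_top, mul_comm r]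

lemma ofList_map_eq_span_image {A α : Type*} [Semiring A] (f : α → A) (l : List α) :
    Ideal.ofList (l.map f) = Ideal.span (f '' {a | a ∈ l}) :=
  congrArg Ideal.span (Set.ext fun _ ↦ List.mem_map)

lemma setOf_mem_take_ofFn {α : Type*} {s : ℕ} (x : Fin s → α) (k : ℕ) :
    {a | a ∈ (List.ofFn x).take k} = x '' {j | j.val < k} := by
  ext a
  simp only [List.mem_take_iff_getElem, List.length_ofFn, List.getElem_ofFn, lt_inf_iff,
    Set.mem_ofPred_eq, Set.mem_image]
  exact ⟨fun ⟨j, ⟨hjk, hjs⟩, hj⟩ ↦ ⟨⟨j, hjs⟩, hjk, hj⟩, fun ⟨j, hjk, hj⟩ ↦ ⟨j, ⟨hjk, j.2⟩, hj⟩⟩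

end RegularSequences

section ReesAlgebra

variable {R : Type*} [CommRing R] (I : Ideal R)

/-- The element `y t` of the Rees algebra `R[It]`, for `y ∈ I`. Its class in `gr_I(R)` is the class
of `y` in `I / I²`, that is, the initial form of `y` when `y ∉ I²`. -/
noncomputable def linearForm (y : I) : reesAlgebra I :=
  ⟨C (y : R) * X, by
    rw [C_mul_X_eq_monomial, reesAlgebra.monomial_mem, pow_one]
    exact y.2⟩

variable {I}

/-- The degree `p` component `{a | a tᵖ ∈ A}` of an ideal `A` of the Rees algebra, as an ideal
of `R`. -/
noncomputable def degreeComponent (A : Ideal (reesAlgebra I)) (p : ℕ) : Ideal R :=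
  ((A.restrictScalars R).map (reesAlgebra I).val.toLinearMap).comap (monomial p)

lemma mem_degreeComponent {A : Ideal (reesAlgebra I)} {p : ℕ} {a : R} :
    a ∈ degreeComponent A p ↔ ∃ f ∈ A, (f : R[X]) = monomial p a :=
  Iff.rfl

lemma degreeComponent_mono {A B : Ideal (reesAlgebra I)} (h : A ≤ B) (p : ℕ) :
    degreeComponent A p ≤ degreeComponent B p :=
  fun _ ⟨f, hf, hfa⟩ ↦ ⟨f, h hf, hfa⟩

lemma pow_mul_mul_pow_sup_pow_le (J : Ideal R) (m n : ℕ) :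
    I ^ m * (J * I ^ (n - 1) ⊔ I ^ (n + 1)) ≤ J * I ^ (m + n - 1) ⊔ I ^ (m + n + 1) := by
  rw [Ideal.mul_sup, mul_left_comm, ← pow_add, ← pow_add]
  exact sup_le_sup (Ideal.mul_mono_right (Ideal.pow_le_pow_right (by lia)))
    (Ideal.pow_le_pow_right (by lia))

variable (I) in
/-- The ideal `⊕ₚ (J Iᵖ⁻¹ + Iᵖ⁺¹) tᵖ` of the Rees algebra. For `J ≤ I` it is the preimage of the
ideal of `gr_I(R)` generated by the classes in `I / I²` of the elements of `J`. The truncated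
exponent at `p = 0` is harmless, as then `J + I = I`. -/
def initialFormIdeal (J : Ideal R) : Ideal (reesAlgebra I) where
  carrier := {f | ∀ p, (f : R[X]).coeff p ∈ J * I ^ (p - 1) ⊔ I ^ (p + 1)}
  zero_mem' p := by simp
  add_mem' hf hg p := by simpa using add_mem (hf p) (hg p)
  smul_mem' c f hf p := by
    rw [smul_eq_mul, Subalgebra.coe_mul, coeff_mul]
    refine sum_mem fun mn hmn ↦ ?_
    rw [← Finset.HasAntidiagonal.mem_antidiagonal.mp hmn]
    exact pow_mul_mul_pow_sup_pow_le J _ _ (Ideal.mul_mem_mul (c.2 mn.1) (hf mn.2))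

lemma degreeComponent_initialFormIdeal_le (J : Ideal R) (p : ℕ) :
    degreeComponent (initialFormIdeal I J) p ≤ J * I ^ (p - 1) ⊔ I ^ (p + 1) := by
  intro a ha
  obtain ⟨f, hf, hfa⟩ := mem_degreeComponent.mp ha
  simpa only [hfa, coeff_monomial_same] using hf p

lemma span_linearForm_sup_grIdeal_le (S : Set I) :
    Ideal.span (linearForm I '' S) ⊔ grIdeal I ≤ initialFormIdeal I (Ideal.span ((↑) '' S)) := by
  rw [grIdeal, ← Ideal.span_union, Ideal.span_le, Set.union_subset_iff]
  constructor
  · rintro _ ⟨y, hy, rfl⟩ p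
    change (C (y : R) * X).coeff p ∈ _
    rw [coeff_C_mul_X]
    split_ifs with hp
    · subst hp
      refine Ideal.mem_sup_left ?_
      simpa using Ideal.subset_span (Set.mem_image_of_mem _ hy)
    · exact zero_mem _
  · rintro _ ⟨u, hu, rfl⟩ p
    change (C u).coeff p ∈ _
    rw [coeff_C]
    split_ifs with hp
    · subst hp
      refine Ideal.mem_sup_right ?_
      simpa using hu
    · exact zero_mem _

lemma pow_succ_le_degreeComponent_grIdeal (p : ℕ) :
    I ^ (p + 1) ≤ degreeComponent (grIdeal I) p := by
  rw [pow_succ, Ideal.mul_le]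
  intro t ht u hu
  refine mem_degreeComponent.mpr ⟨⟨monomial p t, reesAlgebra.monomial_mem.mpr ht⟩ *
    algebraMap R _ u, Ideal.mul_mem_left _ _ (Ideal.subset_span ⟨u, hu, rfl⟩), ?_⟩
  exact monomial_mul_C

lemma span_mul_pow_le_degreeComponent_succ (S : Set I) (p : ℕ) :
    Ideal.span ((↑) '' S) * I ^ p ≤
      degreeComponent (Ideal.span (linearForm I '' S)) (p + 1) := by
  rw [← Ideal.span_eq (I ^ p), Ideal.span_mul_span', Ideal.span_le]
  rintro _ ⟨_, ⟨y, hy, rfl⟩, t, ht, rfl⟩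
  refine mem_degreeComponent.mpr ⟨linearForm I y * ⟨monomial p t, reesAlgebra.monomial_mem.mpr ht⟩,
    Ideal.mul_mem_right _ _ (Ideal.subset_span ⟨y, hy, rfl⟩), ?_⟩
  change C (y : R) * X * monomial p t = _
  rw [mul_assoc, X_mul_monomial, C_mul_monomial]

lemma span_coe_image_le (S : Set I) : Ideal.span ((↑) '' S) ≤ I := by
  rw [Ideal.span_le]
  rintro _ ⟨y, -, rfl⟩
  exact y.2

theorem degreeComponent_span_linearForm_sup_grIdeal (S : Set I) (p : ℕ) :
    degreeComponent (Ideal.span (linearForm I '' S) ⊔ grIdeal I) p =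
      Ideal.span ((↑) '' S) * I ^ (p - 1) ⊔ I ^ (p + 1) := by
  have hpow : I ^ (p + 1) ≤ degreeComponent (Ideal.span (linearForm I '' S) ⊔ grIdeal I) p :=
    (pow_succ_le_degreeComponent_grIdeal p).trans (degreeComponent_mono le_sup_right p)
  refine le_antisymm ((degreeComponent_mono (span_linearForm_sup_grIdeal_le S) p).trans
    (degreeComponent_initialFormIdeal_le _ p)) (sup_le ?_ hpow)
  cases p with
  | zero => exact le_trans (by simpa using span_coe_image_le S) hpow
  | succ p =>
    exact (span_mul_pow_le_degreeComponent_succ S p).trans (degreeComponent_mono le_sup_left _)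

theorem mem_of_mul_mem_of_linearForm_cancel {ys : List I} {y : I}
    (hy : ∀ b, b * Ideal.Quotient.mk (grIdeal I) (linearForm I y) ∈
        Ideal.ofList (ys.map fun z ↦ Ideal.Quotient.mk (grIdeal I) (linearForm I z)) →
      b ∈ Ideal.ofList (ys.map fun z ↦ Ideal.Quotient.mk (grIdeal I) (linearForm I z)))
    {p : ℕ} {a : R} (ha : a ∈ I ^ p)
    (hay : a * y ∈ Ideal.ofList (ys.map (↑)) * I ^ p ⊔ I ^ (p + 2)) :
    a ∈ Ideal.ofList (ys.map (↑)) * I ^ (p - 1) ⊔ I ^ (p + 1) := by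
  have hideal : Ideal.ofList (ys.map fun z ↦ Ideal.Quotient.mk (grIdeal I) (linearForm I z)) =
      (Ideal.span (linearForm I '' {z | z ∈ ys})).map (Ideal.Quotient.mk (grIdeal I)) := by
    rw [ofList_map_eq_span_image, Ideal.map_span, Set.image_image]
  rw [hideal] at hy
  rw [ofList_map_eq_span_image] at hay ⊢
  obtain ⟨g, hg, hgay⟩ := mem_degreeComponent.mp
    ((degreeComponent_span_linearForm_sup_grIdeal {z | z ∈ ys} (p + 1)).ge hay)
  let f : reesAlgebra I := ⟨monomial p a, reesAlgebra.monomial_mem.mpr ha⟩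
  have hfg : f * linearForm I y = g := by
    ext1
    change monomial p a * (C (y : R) * X) = _
    rw [hgay, ← mul_assoc, monomial_mul_C, monomial_mul_X]
  have hf : f ∈ Ideal.span (linearForm I '' {z | z ∈ ys}) ⊔ grIdeal I := by
    rw [← Ideal.mem_quotient_iff_mem_sup] at hg ⊢
    exact hy _ (by rwa [← map_mul, hfg])
  rw [← degreeComponent_span_linearForm_sup_grIdeal]
  exact mem_degreeComponent.mpr ⟨f, hf, rfl⟩

end ReesAlgebra

section ValabregaValla

variable {R : Type*} [CommRing R] {I J : Ideal R}

lemma mul_mem_mul_pow_of_mem_mul_pow_sub_one {y b : R} (hy : y ∈ I) {p : ℕ}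
    (hb : b ∈ J * I ^ (p - 1)) : y * b ∈ J * I ^ p := by
  cases p with
  | zero => exact Ideal.mul_mem_left _ _ hb
  | succ p =>
    rw [pow_succ', mul_left_comm]
    exact Ideal.mul_mem_mul hy hb

lemma sup_span_singleton_mul_pow_inf_pow_le {y : R} (hy : y ∈ I) {p : ℕ}
    (hJ : J * I ^ p ⊓ I ^ (p + 2) ≤ J * I ^ (p + 1))
    (hcancel : ∀ a ∈ I ^ p, a * y ∈ J * I ^ p ⊔ I ^ (p + 2) → a ∈ J * I ^ (p - 1) ⊔ I ^ (p + 1)) :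
    (J ⊔ Ideal.span {y}) * I ^ p ⊓ I ^ (p + 2) ≤ (J ⊔ Ideal.span {y}) * I ^ (p + 1) := by
  rw [Ideal.sup_mul, Ideal.sup_mul]
  rintro z ⟨hz, hzI⟩
  obtain ⟨w, hw, _, hv, rfl⟩ := Submodule.mem_sup.mp hz
  obtain ⟨a, ha, rfl⟩ := Ideal.mem_span_singleton_mul.mp hv
  have hay : a * y ∈ J * I ^ p ⊔ I ^ (p + 2) := by
    rw [show a * y = -w + (w + y * a) by ring]
    exact Submodule.add_mem_sup (neg_mem hw) hzI
  obtain ⟨b, hb, c, hc, rfl⟩ := Submodule.mem_sup.mp (hcancel a ha hay)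
  have hyc : y * c ∈ I ^ (p + 2) := by
    rw [pow_succ']
    exact Ideal.mul_mem_mul hy hc
  have hwyb : w + y * b ∈ J * I ^ p := add_mem hw (mul_mem_mul_pow_of_mem_mul_pow_sub_one hy hb)
  rw [mul_add, ← add_assoc] at hzI ⊢
  exact Submodule.add_mem_sup (hJ ⟨hwyb, (Ideal.add_mem_iff_left _ hyc).mp hzI⟩)
    (Ideal.mem_span_singleton_mul.mpr ⟨c, hc, rfl⟩)

lemma inf_pow_succ_le_mul_pow (hJ : ∀ p, J * I ^ p ⊓ I ^ (p + 2) ≤ J * I ^ (p + 1)) (p : ℕ) :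
    J ⊓ I ^ (p + 1) ≤ J * I ^ p := by
  induction p with
  | zero => simp
  | succ p ih =>
    exact fun z ⟨hzJ, hzI⟩ ↦ hJ p ⟨ih ⟨hzJ, Ideal.pow_le_pow_right (by lia) hzI⟩, hzI⟩

lemma ofList_mul_pow_inf_pow_le (ys : List I)
    (hys : IsWeaklyRegular (GrRing I)
      (ys.map fun y ↦ Ideal.Quotient.mk (grIdeal I) (linearForm I y))) (p : ℕ) :
    Ideal.ofList (ys.map (↑)) * I ^ p ⊓ I ^ (p + 2) ≤ Ideal.ofList (ys.map (↑)) * I ^ (p + 1) := by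
  induction ys using List.reverseRecOn with
  | nil => simp
  | append_singleton ys y ih =>
    rw [List.map_append, List.map_singleton, isWeaklyRegular_append_iff,
      isWeaklyRegular_singleton_iff] at hys
    rw [List.map_append, List.map_singleton, Ideal.ofList_append, Ideal.ofList_singleton]
    exact sup_span_singleton_mul_pow_inf_pow_le y.2 (ih hys.1) fun a ha hay ↦
      mem_of_mul_mem_of_linearForm_cancel
        ((isSMulRegular_quotient_smul_top_iff _ _).mp hys.2) ha hay

theorem ofList_inf_pow_succ_le_mul_pow (ys : List I)
    (hys : IsWeaklyRegular (GrRing I)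
      (ys.map fun y ↦ Ideal.Quotient.mk (grIdeal I) (linearForm I y))) (p : ℕ) :
    Ideal.ofList (ys.map (↑)) ⊓ I ^ (p + 1) ≤ Ideal.ofList (ys.map (↑)) * I ^ p :=
  inf_pow_succ_le_mul_pow (ofList_mul_pow_inf_pow_le ys hys) p

lemma colon_inf_pow_succ_eq_mul_pow {y : R} (hJI : J ≤ I) (hy : y ∈ I)
    (hcancel : ∀ a, a * y ∈ J → a ∈ J) {n : ℕ} (hJ : J ⊓ I ^ (n + 1) ≤ J * I ^ n) :
    (J * I ^ (n + 1)).colon (Ideal.span {y}) ⊓ I ^ (n + 1) = J * I ^ n := by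
  refine le_antisymm ?_ fun a ha ↦ ⟨?_, ?_⟩
  · rintro a ⟨hay, haI⟩
    exact hJ ⟨hcancel a (Ideal.mul_le_left (Ideal.mem_colon_span_singleton.mp hay)), haI⟩
  · refine Ideal.mem_colon_span_singleton.mpr ?_
    rw [pow_succ, ← mul_assoc]
    exact Ideal.mul_mem_mul ha hy
  · rw [pow_succ']
    exact Ideal.mul_mono_left hJI ha

end ValabregaValla

theorem statement1_general {R : Type*} [CommRing R]
    (I : Ideal R) {s : ℕ} (x : Fin s → R) (hx : ∀ i, x i ∈ I)
    (hreg : IsWeaklyRegular R (List.ofFn x))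
    (ξ : Fin s → reesAlgebra I) (hξ : ∀ i, (ξ i : R[X]) = C (x i) * X)
    (hgrreg : IsWeaklyRegular (GrRing I)
      ((List.ofFn fun i ↦ Ideal.Quotient.mk (grIdeal I) (ξ i)).take (s - 1)))
    (n : ℕ) (i : Fin s) :
    (Ideal.span (x '' {j | j < i}) * I ^ (n + 1)).colon (Ideal.span {x i}) ⊓ I ^ (n + 1)
      = Ideal.span (x '' {j | j < i}) * I ^ n := by
  let ys : List I := (List.ofFn fun j ↦ (⟨x j, hx j⟩ : I)).take i
  have hys : ys.map (↑) = (List.ofFn x).take i := by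
    rw [List.map_take, List.map_ofFn]
    rfl
  have hspan : Ideal.span (x '' {j | j < i}) = Ideal.ofList ((List.ofFn x).take i) :=
    congrArg Ideal.span (setOf_mem_take_ofFn x i).symm
  have hξ_eq : ξ = fun j ↦ linearForm I ⟨x j, hx j⟩ := funext fun j ↦ Subtype.ext (hξ j)
  have hgr : IsWeaklyRegular (GrRing I)
      (ys.map fun y ↦ Ideal.Quotient.mk (grIdeal I) (linearForm I y)) := by
    have htake := isWeaklyRegular_take hgrreg i
    rw [List.take_take, min_eq_left (by lia), hξ_eq] at htake
    rwa [List.map_take, List.map_ofFn]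
  have hcancel := (isSMulRegular_quotient_smul_top_iff _ _).mp (hreg.regular_mod_prev i (by simp))
  rw [List.getElem_ofFn] at hcancel
  rw [hspan]
  refine colon_inf_pow_succ_eq_mul_pow ?_ (hx i) hcancel ?_
  · rw [← hys, ofList_map_eq_span_image]
    exact span_coe_image_le _
  · rw [← hys]
    exact ofList_inf_pow_succ_le_mul_pow ys hgr n

/-- If `x₁,…,xₛ ∈ I` is an `R`-regular sequence whose initial forms
`x₁*,…,x_{s-1}*` (the classes of `xᵢt` in `gr_I(R) = R(I)/I·R(I)`) form a
`gr_I(R)`-regular sequence, then the conditions `(𝒯ₙ)` hold for all `n ≥ 2`. -/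
theorem statement1 {R : Type*} [CommRing R] [IsNoetherianRing R] [IsLocalRing R]
    (I : Ideal R) {s : ℕ} (x : Fin s → R) (hx : ∀ i, x i ∈ I)
    (hreg : RingTheory.Sequence.IsRegular R (List.ofFn x))
    (ξ : Fin s → reesAlgebra I)
    (hξ : ∀ i, (ξ i : Polynomial R) = Polynomial.C (x i) * Polynomial.X)
    (hgrreg : RingTheory.Sequence.IsRegular (GrRing I)
      ((List.ofFn fun i => Ideal.Quotient.mk (grIdeal I) (ξ i)).take (s - 1))) :
    ∀ n, 2 ≤ n → ∀ i : Fin s,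
      (Ideal.span (x '' {j | j < i}) * I ^ (n - 1)).colon (Ideal.span {x i}) ⊓ I ^ (n - 1)
        = Ideal.span (x '' {j | j < i}) * I ^ (n - 2) := by
  intro n hn i
  obtain ⟨m, rfl⟩ := Nat.exists_eq_add_of_le' hn
  exact statement1_general I x hx hreg.toIsWeaklyRegular ξ hξ hgrreg.toIsWeaklyRegular m i
end

section
/- Let (R,m) be a Noetherian local ring, I an ideal of R, x_1,…,x_s a sequence of elements of I and n ≥ 2 an integer. Then the following two conditions are equivalent: (ii) in the Rees algebra R[It] ⊆ R[t], for all i = 1,…,s one has I^{n-1}t^{n-1} ∩ ((x_1t,…,x_{i-1}t) : x_i t) = I^{n-1}t^{n-1} ∩ (x_1t,…,x_{i-1}t); (iii) for all i = 1,…,s one has ((x_1,…,x_{i-1})I^{n-1} : x_i) ∩ I^{n-1} = (x_1,…,x_{i-1})I^{n-2}. -/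
/-!
Writing `J_k = {a ∈ R | a tᵏ ∈ J}` for an ideal `J` of `R[It]`, condition (ii) at `i` compares the
degree `n - 1` parts `J_{n-1}` of `J = (x₁t, …, x_{i-1}t) : xᵢt` and of `J = (x₁t, …, x_{i-1}t)`.
Both are computed in `R`: `(x₁t, …, x_{i-1}t)_{k+1} = (x₁, …, x_{i-1}) Iᵏ`, as one sees by comparing
coefficients, and `(J : xt)_k = (J_{k+1} : x) ∩ Iᵏ`. Substituting turns (ii) into (iii).
-/

section ReesDegreePart

open Polynomial

variable {R : Type*} [CommRing R] {I : Ideal R}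

/-- The degree `k` part `{a | a tᵏ ∈ J}` of an ideal `J` of the Rees algebra `R[It]`, as an ideal
of `R`. For `a` to belong to it, `a tᵏ` has to lie in `R[It]`, so it is contained in `Iᵏ`. -/
noncomputable def reesDegreePart (J : Ideal (reesAlgebra I)) (k : ℕ) : Ideal R :=
  ((J.restrictScalars R).map (reesAlgebra I).val.toLinearMap).comap (monomial k)

theorem mem_reesDegreePart {J : Ideal (reesAlgebra I)} {k : ℕ} {a : R} :
    a ∈ reesDegreePart J k ↔ ∃ u ∈ J, (u : R[X]) = C a * X ^ k := by
  rw [C_mul_X_pow_eq_monomial]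
  exact Iff.rfl

theorem mem_reesDegreePart_iff_of_coe_eq {J : Ideal (reesAlgebra I)} {k : ℕ} {a : R}
    {u : reesAlgebra I} (hu : (u : R[X]) = C a * X ^ k) : a ∈ reesDegreePart J k ↔ u ∈ J := by
  rw [mem_reesDegreePart]
  refine ⟨?_, fun huJ => ⟨u, huJ, hu⟩⟩
  rintro ⟨v, hvJ, hv⟩
  rwa [Subtype.ext (hu.trans hv.symm)]

theorem mem_pow_of_coe_eq {k : ℕ} {a : R} {u : reesAlgebra I} (hu : (u : R[X]) = C a * X ^ k) :
    a ∈ I ^ k :=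
  reesAlgebra.monomial_mem.mp (by rw [← C_mul_X_pow_eq_monomial, ← hu]; exact u.2)

theorem exists_coe_eq_of_mem_pow {k : ℕ} {a : R} (ha : a ∈ I ^ k) :
    ∃ u : reesAlgebra I, (u : R[X]) = C a * X ^ k :=
  ⟨⟨monomial k a, reesAlgebra.monomial_mem.mpr ha⟩, C_mul_X_pow_eq_monomial.symm⟩

theorem homogeneous_inter_subset_iff_reesDegreePart_le {J K : Ideal (reesAlgebra I)} {k : ℕ} :
    {u : reesAlgebra I | ∃ a ∈ I ^ k, (u : R[X]) = C a * X ^ k} ∩ J ⊆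
        {u : reesAlgebra I | ∃ a ∈ I ^ k, (u : R[X]) = C a * X ^ k} ∩ K ↔
      reesDegreePart J k ≤ reesDegreePart K k := by
  constructor
  · intro hsub a ha
    obtain ⟨u, huJ, hu⟩ := mem_reesDegreePart.mp ha
    have huK : u ∈ K := (hsub ⟨⟨a, mem_pow_of_coe_eq hu, hu⟩, huJ⟩).2
    exact mem_reesDegreePart.mpr ⟨u, huK, hu⟩
  · rintro hle u ⟨⟨a, ha, hu⟩, huJ⟩
    have haJ : a ∈ reesDegreePart J k := mem_reesDegreePart.mpr ⟨u, huJ, hu⟩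
    exact ⟨⟨a, ha, hu⟩, (mem_reesDegreePart_iff_of_coe_eq hu).mp (hle haJ)⟩

theorem homogeneous_inter_eq_iff_reesDegreePart_eq {J K : Ideal (reesAlgebra I)} {k : ℕ} :
    {u : reesAlgebra I | ∃ a ∈ I ^ k, (u : R[X]) = C a * X ^ k} ∩ J =
        {u : reesAlgebra I | ∃ a ∈ I ^ k, (u : R[X]) = C a * X ^ k} ∩ K ↔
      reesDegreePart J k = reesDegreePart K k := by
  simp only [le_antisymm_iff, homogeneous_inter_subset_iff_reesDegreePart_le]

theorem coe_mul_eq_C_mul_X_pow_succ {k : ℕ} {a y : R} {u η : reesAlgebra I}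
    (hu : (u : R[X]) = C a * X ^ k) (hη : (η : R[X]) = C y * X) :
    ((u * η : reesAlgebra I) : R[X]) = C (a * y) * X ^ (k + 1) := by
  rw [Subalgebra.coe_mul, hu, hη, C_mul]
  ring

theorem reesDegreePart_colon_span_singleton (J : Ideal (reesAlgebra I)) {y : R}
    {η : reesAlgebra I} (hη : (η : R[X]) = C y * X) (k : ℕ) :
    reesDegreePart (J.colon (Ideal.span {η})) k =
      (reesDegreePart J (k + 1)).colon (Ideal.span {y}) ⊓ I ^ k := by
  have mem_colon_iff {a : R} {u : reesAlgebra I} (hu : (u : R[X]) = C a * X ^ k) :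
      a ∈ (reesDegreePart J (k + 1)).colon (Ideal.span {y}) ↔ u ∈ J.colon (Ideal.span {η}) := by
    rw [Ideal.mem_colon_span_singleton, Ideal.mem_colon_span_singleton,
      mem_reesDegreePart_iff_of_coe_eq (coe_mul_eq_C_mul_X_pow_succ hu hη)]
  ext a
  rw [Submodule.mem_inf]
  constructor
  · intro ha
    obtain ⟨u, huJ, hu⟩ := mem_reesDegreePart.mp ha
    exact ⟨(mem_colon_iff hu).mpr huJ, mem_pow_of_coe_eq hu⟩
  · rintro ⟨hay, ha⟩
    obtain ⟨u, hu⟩ := exists_coe_eq_of_mem_pow ha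
    exact mem_reesDegreePart.mpr ⟨u, (mem_colon_iff hu).mp hay, hu⟩

variable {ι : Type*} {x : ι → R} {ξ : ι → reesAlgebra I}

theorem coeff_succ_mem_of_mem_span (hξ : ∀ i, (ξ i : R[X]) = C (x i) * X) {S : Set ι}
    {v : reesAlgebra I} (hv : v ∈ Ideal.span (ξ '' S)) (k : ℕ) :
    (v : R[X]).coeff (k + 1) ∈ Ideal.span (x '' S) * I ^ k := by
  have coeff_mul_generator (f : reesAlgebra I) (j : ι) :
      ((f * ξ j : reesAlgebra I) : R[X]).coeff (k + 1) = x j * (f : R[X]).coeff k := by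
    rw [Subalgebra.coe_mul, hξ, ← mul_assoc, coeff_mul_X, coeff_mul_C, mul_comm]
  obtain ⟨T, hTS, f, rfl⟩ := (Submodule.mem_span_image_iff_exists_fun _).mp hv
  rw [AddSubmonoidClass.coe_finsetSum, finsetSum_coeff]
  refine Submodule.sum_mem _ fun j _ => ?_
  rw [smul_eq_mul, coeff_mul_generator]
  exact Ideal.mul_mem_mul (Ideal.subset_span ⟨j, hTS j.2, rfl⟩) ((f j).2 k)

theorem reesDegreePart_span_succ (hξ : ∀ i, (ξ i : R[X]) = C (x i) * X) (S : Set ι) (k : ℕ) :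
    reesDegreePart (Ideal.span (ξ '' S)) (k + 1) = Ideal.span (x '' S) * I ^ k := by
  apply le_antisymm
  · intro a ha
    obtain ⟨v, hv, hva⟩ := mem_reesDegreePart.mp ha
    simpa [hva] using coeff_succ_mem_of_mem_span hξ hv k
  · rw [← Ideal.span_eq (I ^ k), Ideal.span_mul_span', Ideal.span_le]
    rintro _ ⟨_, ⟨j, hj, rfl⟩, b, hb, rfl⟩
    obtain ⟨u, hu⟩ := exists_coe_eq_of_mem_pow hb
    have huξ : u * ξ j ∈ Ideal.span (ξ '' S) :=
      Ideal.mul_mem_left _ u (Ideal.subset_span ⟨j, hj, rfl⟩)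
    refine mem_reesDegreePart.mpr ⟨u * ξ j, huξ, ?_⟩
    rw [coe_mul_eq_C_mul_X_pow_succ hu (hξ j), mul_comm b]

end ReesDegreePart

theorem statement2_general {R : Type*} [CommRing R] (I : Ideal R) {ι : Type*} (x : ι → R)
    (n : ℕ) (hn : 2 ≤ n) (ξ : ι → reesAlgebra I)
    (hξ : ∀ i, (ξ i : Polynomial R) = Polynomial.C (x i) * Polynomial.X) (S : Set ι) (i : ι) :
    {u : reesAlgebra I | ∃ a ∈ I ^ (n - 1),
          (u : Polynomial R) = Polynomial.C a * Polynomial.X ^ (n - 1)} ∩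
        ((Ideal.span (ξ '' S)).colon (Ideal.span {ξ i}) : Set (reesAlgebra I))
      = {u : reesAlgebra I | ∃ a ∈ I ^ (n - 1),
          (u : Polynomial R) = Polynomial.C a * Polynomial.X ^ (n - 1)} ∩
        (Ideal.span (ξ '' S) : Set (reesAlgebra I)) ↔
    (Ideal.span (x '' S) * I ^ (n - 1)).colon (Ideal.span {x i}) ⊓ I ^ (n - 1)
      = Ideal.span (x '' S) * I ^ (n - 2) := by
  obtain ⟨k, rfl⟩ := Nat.exists_eq_add_of_le' hn
  rw [homogeneous_inter_eq_iff_reesDegreePart_eq, reesDegreePart_colon_span_singleton _ (hξ i),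
    reesDegreePart_span_succ hξ, show k + 2 - 1 = k + 1 from rfl, reesDegreePart_span_succ hξ,
    Nat.add_sub_cancel]

/-- Equivalence of the vanishing conditions in the Rees algebra `R[It]` and the
corresponding colon-ideal conditions in `R`:  for all `i = 1,…,s`,
`Iⁿ⁻¹tⁿ⁻¹ ∩ ((x₁t,…,x_{i-1}t) : xᵢt) = Iⁿ⁻¹tⁿ⁻¹ ∩ (x₁t,…,x_{i-1}t)`
iff for all `i = 1,…,s`,
`((x₁,…,x_{i-1})Iⁿ⁻¹ : xᵢ) ∩ Iⁿ⁻¹ = (x₁,…,x_{i-1})Iⁿ⁻²`. -/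
theorem statement2 {R : Type*} [CommRing R] [IsNoetherianRing R] [IsLocalRing R]
    (I : Ideal R) {s : ℕ} (x : Fin s → R) (hx : ∀ i, x i ∈ I)
    (n : ℕ) (hn : 2 ≤ n)
    (ξ : Fin s → reesAlgebra I)
    (hξ : ∀ i, (ξ i : Polynomial R) = Polynomial.C (x i) * Polynomial.X) :
    (∀ i : Fin s,
        {u : reesAlgebra I | ∃ a ∈ I ^ (n - 1),
            (u : Polynomial R) = Polynomial.C a * Polynomial.X ^ (n - 1)} ∩
          ((Ideal.span (ξ '' {j | j < i})).colon (Ideal.span {ξ i}) : Set (reesAlgebra I))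
        = {u : reesAlgebra I | ∃ a ∈ I ^ (n - 1),
            (u : Polynomial R) = Polynomial.C a * Polynomial.X ^ (n - 1)} ∩
          (Ideal.span (ξ '' {j | j < i}) : Set (reesAlgebra I))) ↔
    (∀ i : Fin s,
        (Ideal.span (x '' {j | j < i}) * I ^ (n - 1)).colon (Ideal.span {x i}) ⊓ I ^ (n - 1)
          = Ideal.span (x '' {j | j < i}) * I ^ (n - 2)) :=
  forall_congr' fun i => statement2_general I x n hn ξ hξ {j | j < i} i
end
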